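/- There is a universal constant C > 0 with the following property. Let K, E > 0 and let Q : ℝ³ → Sym₀ be Lipschitz with Lipschitz constant at most K and with ∫_{ℝ³} f(Q(x)) dx ≤ E. For δ > 0 set U_δ = { x ∈ ℝ³ : dist(Q(x), 𝒩) > δ } and f_min^δ = inf{ f(P) : P ∈ Sym₀, dist(P,𝒩) ≥ δ/2 } (which is positive). Then there exists a finite set I ⊂ U_δ such that U_δ ⊆ ⋃_{x∈I} B_{δ/(2K)}(x) ⊆ U_{δ/2} and #I ≤ C · K³ · E / ( f_min^δ · δ³ ). -/

import Mathlib

/- STATEMENT 9: There is a universal constant C > 0 such that: for K, E > 0 and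
Q : ℝ³ → Sym₀ Lipschitz with constant ≤ K and ∫ f(Q) ≤ E, for every δ > 0 there is a
finite set I ⊂ U_δ with U_δ ⊆ ⋃_{x∈I} B_{δ/(2K)}(x) ⊆ U_{δ/2} and
#I ≤ C·K³·E/(f_min^δ·δ³), where U_δ = {x : dist(Q(x),𝒩) > δ} and
f_min^δ = inf{f(P) : P ∈ Sym₀, dist(P,𝒩) ≥ δ/2}. -/

noncomputable section

open Matrix MeasureTheory Metric Set

abbrev Mat3 : Type := Matrix (Fin 3) (Fin 3) ℝ
abbrev V3 : Type := EuclideanSpace ℝ (Fin 3)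
abbrev E9 : Type := EuclideanSpace ℝ (Fin 3 × Fin 3)

/-- View a point of `E9` (ℝ^{3×3} with the Euclidean = Frobenius norm) as a matrix. -/
def toM (A : E9) : Mat3 := Matrix.of fun i j => A (i, j)

def Sym0E : Set E9 := {A | (toM A).IsSymm ∧ (toM A).trace = 0}

def unitVec (n : Fin 3 → ℝ) : Prop := ∑ i, (n i) ^ 2 = 1

def uniax (s : ℝ) (n : Fin 3 → ℝ) : Mat3 :=
  s • (Matrix.vecMulVec n n - (1 / 3 : ℝ) • (1 : Mat3))

def sStar (a b c : ℝ) : ℝ := (b + Real.sqrt (b ^ 2 + 24 * a * c)) / (4 * c)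

def fLdG (a b c C : ℝ) (Q : Mat3) : ℝ :=
  C - a / 2 * (Q * Q).trace - b / 3 * (Q * Q * Q).trace + c / 4 * ((Q * Q).trace) ^ 2

/-- The vacuum manifold 𝒩 inside `E9`. -/
def NsetE (s : ℝ) : Set E9 := {A | ∃ n, unitVec n ∧ toM A = uniax s n}

/-- f_min^δ = inf { f(P) : P ∈ Sym₀, dist(P,𝒩) ≥ δ/2 }. -/
def fminδ (a b c C : ℝ) (δ : ℝ) : ℝ :=
  sInf {v | ∃ P ∈ Sym0E, δ / 2 ≤ infDist P (NsetE (sStar a b c)) ∧ v = fLdG a b c C (toM P)}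

/-!
A maximal `δ/(4K)`-separated subset of `U_δ` gives a cover by balls of radius `δ/(2K)`. The balls
of half the separation around its points are disjoint and, `Q` being `K`-Lipschitz, lie in
`U_{δ/2}`, where `f ∘ Q ≥ f_min^δ`; integrating `f ∘ Q` over them bounds their number.

That `f_min^δ` is positive rests on the following. Write `tr Q² = 2/3 * s²` with `s ≥ 0`. The
discriminant of the characteristic polynomial of `Q` being nonnegative, `tr Q³ ≤ 2/9 * s³`, with
equality exactly when `Q = s (n ⊗ n - I/3)`. Hence `f(Q)` exceeds its value on `𝒩` by at least
`β (s - s*)² + b/3 * (2/9 * s³ - tr Q³)` for some `β > 0`. So `f` is coercive and its only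
minimizers are the points of `𝒩`.
-/

open scoped NNReal ENNReal
open Filter Module

lemma pairwiseDisjoint_ball_of_isSeparated {X : Type*} [PseudoMetricSpace X] {ε : ℝ≥0} {s : Set X}
    (hs : IsSeparated ε s) : s.PairwiseDisjoint fun x ↦ ball x (ε / 2) := by
  intro x hx y hy hxy
  have hdist : (ε : ℝ) < dist x y := by
    rw [← coe_nndist, NNReal.coe_lt_coe, ← ENNReal.coe_lt_coe, ← edist_nndist]
    exact hs hx hy hxy
  exact ball_disjoint_ball (by linarith)

lemma card_mul_le_lintegral_of_pairwise_disjoint {α ι : Type*} [MeasurableSpace α] {μ : Measure α}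
    {g : α → ℝ≥0∞} {s : ι → Set α} {c : ℝ≥0∞} (hs : ∀ i, MeasurableSet (s i))
    (hdisj : Pairwise (Function.onFun Disjoint s)) (hc : ∀ i, c ≤ ∫⁻ x in s i, g x ∂μ) :
    ENat.card ι * c ≤ ∫⁻ x, g x ∂μ :=
  calc (ENat.card ι : ℝ≥0∞) * c = ∑' _ : ι, c := (ENNReal.tsum_const c).symm
    _ ≤ ∑' i, μ.withDensity g (s i) :=
        ENNReal.tsum_le_tsum fun i ↦ (hc i).trans_eq (withDensity_apply g (hs i)).symm
    _ ≤ μ.withDensity g univ :=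
        (tsum_meas_le_meas_iUnion_of_disjoint _ hs hdisj).trans (measure_mono (subset_univ _))
    _ = ∫⁻ x, g x ∂μ := by rw [withDensity_apply g .univ, Measure.restrict_univ]

section Covering

variable {E : Type*} [NormedAddCommGroup E] [MeasurableSpace E] [BorelSpace E]
  (μ : Measure E) [μ.IsAddHaarMeasure] {g : E → ℝ≥0∞} {A : Set E}

lemma packingNumber_mul_le_lintegral {m : ℝ≥0∞} {ε : ℝ≥0}
    (hg : ∀ x ∈ A, ∀ y ∈ ball x (ε / 2), m ≤ g y) :
    packingNumber ε A * (m * μ (ball 0 (ε / 2))) ≤ ∫⁻ x, g x ∂μ := by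
  simp only [packingNumber, ENat.toENNReal_iSup, ENNReal.iSup_mul, iSup_le_iff]
  intro s hsA hs
  refine card_mul_le_lintegral_of_pairwise_disjoint (s := fun x : s ↦ ball (x : E) (ε / 2))
    (fun _ ↦ measurableSet_ball) ?_ fun x ↦ ?_
  · exact (pairwiseDisjoint_ball_of_isSeparated hs).subtype _ _
  · calc m * μ (ball 0 (ε / 2)) = ∫⁻ _ in ball (x : E) (ε / 2), m ∂μ := by
          rw [setLIntegral_const, Measure.addHaar_ball_center μ x]
      _ ≤ ∫⁻ y in ball (x : E) (ε / 2), g y ∂μ :=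
          setLIntegral_mono' measurableSet_ball (hg x (hsA x.2))

lemma exists_finset_subset_iUnion_ball_card_mul_le {m : ℝ≥0∞} {r : ℝ} (hr : 0 < r) (hm : m ≠ 0)
    (hg : ∀ x ∈ A, ∀ y ∈ ball x r, m ≤ g y) (hgtop : ∫⁻ x, g x ∂μ ≠ ∞) :
    ∃ I : Finset E, (I : Set E) ⊆ A ∧ A ⊆ ⋃ x ∈ I, ball x r ∧
      I.card * (m * μ (ball 0 (r / 4))) ≤ ∫⁻ x, g x ∂μ := by
  set ε : ℝ≥0 := ⟨r / 2, by positivity⟩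
  have hε : (ε / 2 : ℝ) = r / 4 := by change r / 2 / 2 = r / 4; ring
  have hpack : packingNumber ε A * (m * μ (ball 0 (r / 4))) ≤ ∫⁻ x, g x ∂μ := by
    rw [← hε]
    refine packingNumber_mul_le_lintegral μ fun x hx y hy ↦ hg x hx y ?_
    exact ball_subset_ball (by linarith) hy
  have hball : m * μ (ball 0 (r / 4)) ≠ 0 :=
    mul_ne_zero hm (measure_ball_pos μ 0 (by positivity)).ne'
  have hcov : (coveringNumber ε A : ℝ≥0∞) * (m * μ (ball 0 (r / 4))) ≤ ∫⁻ x, g x ∂μ :=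
    le_trans (by gcongr; exact coveringNumber_le_packingNumber ε A) hpack
  have hfin : coveringNumber ε A ≠ ⊤ := by
    intro htop
    rw [htop, ENat.toENNReal_top, ENNReal.top_mul hball, top_le_iff] at hcov
    exact hgtop hcov
  obtain ⟨s, hsA, hsfin, hscov, hscard⟩ := exists_set_encard_eq_coveringNumber hfin
  refine ⟨hsfin.toFinset, by simpa using hsA, ?_, ?_⟩
  · refine (isCover_iff_subset_iUnion_closedBall.1 hscov).trans ?_
    simp only [hsfin.mem_toFinset]
    exact iUnion₂_mono fun x _ ↦ closedBall_subset_ball (half_lt_self hr)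
  · rwa [← hscard, hsfin.encard_eq_coe_toFinset_card, ENat.toENNReal_coe] at hcov

end Covering

lemma sub_lt_infDist_of_lipschitzWith {X Y : Type*} [PseudoMetricSpace X] [PseudoMetricSpace Y]
    {K : ℝ≥0} {Q : X → Y} (hQ : LipschitzWith K Q) {N : Set Y} {δ : ℝ} {x y : X}
    (hx : δ < infDist (Q x) N) : δ - K * dist y x < infDist (Q y) N := by
  have htri : infDist (Q x) N ≤ infDist (Q y) N + dist (Q x) (Q y) := infDist_le_infDist_add_dist
  have hlip : dist (Q x) (Q y) ≤ K * dist y x := dist_comm x y ▸ hQ.dist_le_mul x y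
  linarith

lemma ball_subset_half_lt_infDist {X Y : Type*} [PseudoMetricSpace X] [PseudoMetricSpace Y]
    {K : ℝ≥0} (hK : 0 < K) {Q : X → Y} (hQ : LipschitzWith K Q) {N : Set Y} {δ : ℝ} {x : X}
    (hx : δ < infDist (Q x) N) : ball x (δ / (2 * K)) ⊆ {y | δ / 2 < infDist (Q y) N} := by
  intro y hy
  have hKy : K * dist y x < δ / 2 := by
    rw [mem_ball, lt_div_iff₀ (by positivity)] at hy
    linarith
  have := sub_lt_infDist_of_lipschitzWith hQ (y := y) hx
  exact lt_of_le_of_lt (by linarith) this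

lemma measureReal_ball_pos {X : Type*} [PseudoMetricSpace X] [ProperSpace X] [MeasurableSpace X]
    (μ : Measure X) [μ.IsOpenPosMeasure] [IsFiniteMeasureOnCompacts μ] (x : X) {r : ℝ}
    (hr : 0 < r) : 0 < μ.real (ball x r) :=
  ENNReal.toReal_pos (measure_ball_pos μ x hr).ne' measure_ball_lt_top.ne

theorem exists_finset_cover_lt_infDist {E X : Type*} [NormedAddCommGroup E] [NormedSpace ℝ E]
    [FiniteDimensional ℝ E] [MeasurableSpace E] [BorelSpace E] (μ : Measure E)
    [μ.IsAddHaarMeasure] [PseudoMetricSpace X] {N : Set X} {f : X → ℝ} {K : ℝ≥0} (hK : 0 < K)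
    {Q : E → X} (hQ : LipschitzWith K Q) {δ m M : ℝ} (hδ : 0 < δ) (hm : 0 < m) (hM : 0 ≤ M)
    (hf : ∀ x, δ / 2 < infDist (Q x) N → m ≤ f (Q x))
    (hint : ∫⁻ x, ENNReal.ofReal (f (Q x)) ∂μ ≤ ENNReal.ofReal M) :
    ∃ I : Finset E, (I : Set E) ⊆ {x | δ < infDist (Q x) N} ∧
      {x | δ < infDist (Q x) N} ⊆ ⋃ x ∈ I, ball x (δ / (2 * K)) ∧
      (⋃ x ∈ I, ball x (δ / (2 * K))) ⊆ {x | δ / 2 < infDist (Q x) N} ∧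
      I.card ≤ 8 ^ finrank ℝ E / μ.real (ball 0 1) * K ^ finrank ℝ E * M /
        (m * δ ^ finrank ℝ E) := by
  set d := finrank ℝ E
  set ω := μ.real (ball 0 1)
  have hω : 0 < ω := measureReal_ball_pos μ 0 one_pos
  have hball := fun x (hx : δ < infDist (Q x) N) ↦ ball_subset_half_lt_infDist hK hQ hx
  obtain ⟨I, hIU, hUI, hcard⟩ := exists_finset_subset_iUnion_ball_card_mul_le μ
    (A := {x | δ < infDist (Q x) N}) (m := ENNReal.ofReal m) (r := δ / (2 * K))
    (by positivity) (by simpa using hm)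
    (fun x hx y hy ↦ ENNReal.ofReal_le_ofReal (hf y (hball x hx hy)))
    (hint.trans_lt ENNReal.ofReal_lt_top).ne
  refine ⟨I, hIU, hUI, iUnion₂_subset fun x hx ↦ hball x (hIU hx), ?_⟩
  have hvol : μ (ball 0 (δ / (2 * K) / 4)) = ENNReal.ofReal ((δ / (8 * K)) ^ d * ω) := by
    rw [show δ / (2 * K) / 4 = δ / (8 * K) by ring, Measure.addHaar_ball_of_pos μ 0 (by positivity),
      ENNReal.ofReal_mul (by positivity), ofReal_measureReal measure_ball_lt_top.ne]
  have hcardM : I.card * (m * ((δ / (8 * K)) ^ d * ω)) ≤ M := by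
    rw [← ENNReal.ofReal_le_ofReal_iff hM, ENNReal.ofReal_mul (by positivity),
      ENNReal.ofReal_mul hm.le, ← hvol, ENNReal.ofReal_natCast]
    exact hcard.trans hint
  calc (I.card : ℝ)
      = 8 ^ d / ω * K ^ d * (I.card * (m * ((δ / (8 * K)) ^ d * ω))) / (m * δ ^ d) := by
        simp only [div_pow, mul_pow]
        field_simp
    _ ≤ 8 ^ d / ω * K ^ d * M / (m * δ ^ d) := by gcongr

section Spectral

variable {𝕜 n : Type*} [RCLike 𝕜] [Fintype n] [DecidableEq n] {A : Matrix n n 𝕜}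

lemma trace_pow_eq_sum_eigenvalues_pow (hA : A.IsHermitian) (k : ℕ) :
    (A ^ k).trace = ∑ i, (hA.eigenvalues i : 𝕜) ^ k := by
  conv_lhs => rw [hA.spectral_theorem, ← map_pow, Unitary.conjStarAlgAut_apply, trace_mul_comm,
    ← mul_assoc, Unitary.coe_star_mul_self, one_mul, diagonal_pow]
  simp [trace_diagonal]

lemma eq_smul_vecMulVec_add_smul_one_of_eigenvalues_eq (hA : A.IsHermitian) {k : n} {s t : ℝ}
    (h : ∀ i, hA.eigenvalues i = (Pi.single k s : n → ℝ) i + t) :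
    A = (s : 𝕜) • vecMulVec (hA.eigenvectorBasis k) (star (hA.eigenvectorBasis k)) +
      (t : 𝕜) • 1 := by
  have hdiag : (Matrix.diagonal (RCLike.ofReal ∘ hA.eigenvalues) : Matrix n n 𝕜) =
      (s : 𝕜) • vecMulVec (Pi.single k 1) (star (Pi.single k 1)) + (t : 𝕜) • 1 := by
    ext i j
    rcases eq_or_ne i j with rfl | hij
    · rcases eq_or_ne i k with rfl | hik <;>
        simp [*, vecMulVec_apply, RCLike.real_smul_eq_coe_mul, RCLike.algebraMap_eq_ofReal]
    · rcases eq_or_ne i k with rfl | hik <;> simp [*, vecMulVec_apply, hij.symm]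
  conv_lhs => rw [hA.spectral_theorem, hdiag, map_add, map_smul, map_smul, map_one,
    Unitary.conjStarAlgAut_apply, mul_vecMulVec, vecMulVec_mul, star_eq_conjTranspose,
    ← star_mulVec, hA.eigenvectorUnitary_mulVec]

end Spectral

lemma exists_eq_single_of_sum_eq {ι : Type*} [Fintype ι] [DecidableEq ι] {v : ι → ℝ} {s : ℝ}
    (hs : 0 < s) (hv : ∀ i, v i = 0 ∨ v i = s) (hsum : ∑ i, v i = s) : ∃ k, v = Pi.single k s := by
  obtain ⟨k, -, hk⟩ : ∃ k ∈ Finset.univ, v k ≠ 0 :=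
    Finset.exists_ne_zero_of_sum_ne_zero (hsum ▸ hs.ne')
  have hks : v k = s := (hv k).resolve_left hk
  have hrest : ∑ i ∈ Finset.univ.erase k, v i = 0 := by
    linarith [Finset.add_sum_erase Finset.univ v (Finset.mem_univ k)]
  rw [Finset.sum_eq_zero_iff_of_nonneg fun i _ ↦ (hv i).elim Eq.ge fun h ↦ h ▸ hs.le] at hrest
  refine ⟨k, funext fun i ↦ ?_⟩
  rcases eq_or_ne i k with rfl | hik
  · rw [hks, Pi.single_eq_same]
  · rw [hrest i (by simpa using hik), Pi.single_eq_of_ne hik]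

lemma six_mul_sum_cube_sq_le {x y z : ℝ} (h : x + y + z = 0) :
    6 * (x ^ 3 + y ^ 3 + z ^ 3) ^ 2 ≤ (x ^ 2 + y ^ 2 + z ^ 2) ^ 3 := by
  obtain rfl : z = -x - y := by linarith
  -- The difference is twice the discriminant of the cubic with roots `x`, `y`, `z`.
  have hdiscr := sq_nonneg ((x - y) * (2 * x + y) * (x + 2 * y))
  linarith

lemma eq_or_eq_of_sum_sq_of_sum_cube {x y z s : ℝ} (h₁ : x + y + z = 0)
    (h₂ : x ^ 2 + y ^ 2 + z ^ 2 = 2 / 3 * s ^ 2) (h₃ : x ^ 3 + y ^ 3 + z ^ 3 = 2 / 9 * s ^ 3) :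
    x + s / 3 = 0 ∨ x + s / 3 = s := by
  obtain rfl : z = -x - y := by linarith
  -- The power sums determine the cubic with roots `x`, `y`, `z`.
  have hroot : (x + s / 3) ^ 2 * (x + s / 3 - s) = 0 := by
    linear_combination (x / 2) * h₂ + (1 / 3) * h₃
  exact (mul_eq_zero.1 hroot).imp (pow_eq_zero_iff two_ne_zero).1 sub_eq_zero.1

section Matrices

variable {P : Mat3} {s : ℝ} {n : Fin 3 → ℝ}

lemma trace_pow_three_le (hP : P.IsSymm) (htr : P.trace = 0) (hs : 0 ≤ s)
    (hsq : (P ^ 2).trace = 2 / 3 * s ^ 2) : (P ^ 3).trace ≤ 2 / 9 * s ^ 3 := by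
  have hH : P.IsHermitian := isHermitian_iff_isSymm.2 hP
  have hsum := hH.trace_eq_sum_eigenvalues
  simp only [trace_pow_eq_sum_eigenvalues_pow hH, Fin.sum_univ_three, RCLike.ofReal_real_eq_id,
    id_eq] at hsum hsq ⊢
  have hcube := six_mul_sum_cube_sq_le (hsum.symm.trans htr)
  rw [hsq] at hcube
  refine (abs_le_of_sq_le_sq' ?_ (by positivity)).2
  linarith

lemma exists_unitVec_eq_uniax (hP : P.IsSymm) (htr : P.trace = 0) (hs : 0 < s)
    (hsq : (P ^ 2).trace = 2 / 3 * s ^ 2) (hcube : (P ^ 3).trace = 2 / 9 * s ^ 3) :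
    ∃ n, unitVec n ∧ P = uniax s n := by
  have hH : P.IsHermitian := isHermitian_iff_isSymm.2 hP
  have hsum := hH.trace_eq_sum_eigenvalues
  simp only [trace_pow_eq_sum_eigenvalues_pow hH, htr, Fin.sum_univ_three,
    RCLike.ofReal_real_eq_id, id_eq] at hsum hsq hcube
  have hvalues : ∀ i, hH.eigenvalues i + s / 3 = 0 ∨ hH.eigenvalues i + s / 3 = s := by
    intro i
    match i with
    | 0 => exact eq_or_eq_of_sum_sq_of_sum_cube hsum.symm hsq hcube
    | 1 =>
      exact eq_or_eq_of_sum_sq_of_sum_cube (y := hH.eigenvalues 0) (z := hH.eigenvalues 2)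
        (by linarith) (by linarith) (by linarith)
    | 2 =>
      exact eq_or_eq_of_sum_sq_of_sum_cube (y := hH.eigenvalues 0) (z := hH.eigenvalues 1)
        (by linarith) (by linarith) (by linarith)
  obtain ⟨k, hk⟩ := exists_eq_single_of_sum_eq hs hvalues (by rw [Fin.sum_univ_three]; linarith)
  refine ⟨hH.eigenvectorBasis k, ?_, ?_⟩
  · have hnorm := EuclideanSpace.real_norm_sq_eq (hH.eigenvectorBasis k)
    rwa [hH.eigenvectorBasis.orthonormal.norm_eq_one, one_pow, eq_comm] at hnorm
  · have hdecomp := eq_smul_vecMulVec_add_smul_one_of_eigenvalues_eq hH (k := k) (s := s)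
      (t := -(s / 3)) fun i ↦ by rw [← congrFun hk i]; ring
    conv_lhs => rw [hdecomp]
    simp only [uniax, star_trivial, RCLike.ofReal_real_eq_id, id_eq]
    module

lemma dotProduct_self_eq_one_of_unitVec (hn : unitVec n) : n ⬝ᵥ n = 1 := by
  simpa [unitVec, dotProduct, ← sq] using hn

lemma isIdempotentElem_vecMulVec_self (hn : unitVec n) : IsIdempotentElem (vecMulVec n n) := by
  rw [IsIdempotentElem, vecMulVec_mul_vecMulVec, dotProduct_self_eq_one_of_unitVec hn, one_smul]

lemma trace_vecMulVec_self (hn : unitVec n) : (vecMulVec n n).trace = 1 := by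
  rw [trace_vecMulVec, dotProduct_self_eq_one_of_unitVec hn]

lemma isSymm_uniax (s : ℝ) (n : Fin 3 → ℝ) : (uniax s n).IsSymm := by
  simp [uniax, Matrix.IsSymm, transpose_vecMulVec]

lemma trace_uniax (hn : unitVec n) : (uniax s n).trace = 0 := by
  simp [uniax, trace_vecMulVec_self hn]

lemma uniax_sq (hn : unitVec n) :
    uniax s n ^ 2 = s ^ 2 • ((1 / 3 : ℝ) • vecMulVec n n + (1 / 9 : ℝ) • (1 : Mat3)) := by
  simp only [uniax, smul_pow, sq (vecMulVec n n - _), sub_mul, mul_sub, smul_mul_assoc,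
    mul_smul_comm, one_mul, mul_one, (isIdempotentElem_vecMulVec_self hn).eq]
  module

lemma uniax_pow_three (hn : unitVec n) :
    uniax s n ^ 3 = s ^ 3 • ((1 / 3 : ℝ) • vecMulVec n n - (1 / 27 : ℝ) • (1 : Mat3)) := by
  rw [pow_succ, uniax_sq hn]
  simp only [uniax, add_mul, mul_sub, smul_mul_assoc, mul_smul_comm, one_mul, mul_one,
    (isIdempotentElem_vecMulVec_self hn).eq]
  module

lemma trace_uniax_sq (hn : unitVec n) : (uniax s n ^ 2).trace = 2 / 3 * s ^ 2 := by
  simp only [uniax_sq hn, trace_smul, trace_add, trace_vecMulVec_self hn, trace_one,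
    Fintype.card_fin, smul_eq_mul]
  ring

lemma trace_uniax_pow_three (hn : unitVec n) : (uniax s n ^ 3).trace = 2 / 9 * s ^ 3 := by
  simp only [uniax_pow_three hn, trace_smul, trace_sub, trace_vecMulVec_self hn, trace_one,
    Fintype.card_fin, smul_eq_mul]
  ring

end Matrices

section ScalarOrder

variable {A : E9} {s : ℝ}

/-- The scalar order parameter of a tensor `A ∈ Sym₀`: the number `s ≥ 0` with
`tr A² = 2/3 * s²`, so that `A` has the same norm as the uniaxial tensors `uniax s n`. -/
def scalarOrder (A : E9) : ℝ := √(3 / 2) * ‖A‖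

lemma scalarOrder_nonneg (A : E9) : 0 ≤ scalarOrder A := by
  unfold scalarOrder
  positivity

lemma scalarOrder_sub_le (A B : E9) : scalarOrder A - scalarOrder B ≤ √(3 / 2) * dist A B := by
  rw [scalarOrder, scalarOrder, ← mul_sub, dist_eq_norm]
  gcongr
  exact norm_sub_norm_le A B

lemma tendsto_scalarOrder_cocompact : Tendsto scalarOrder (cocompact E9) atTop :=
  (tendsto_norm_cocompact_atTop (E := E9)).const_mul_atTop (by positivity)

lemma trace_toM_sq (hA : (toM A).IsSymm) : (toM A ^ 2).trace = 2 / 3 * scalarOrder A ^ 2 := by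
  have hnorm : (toM A ^ 2).trace = ‖A‖ ^ 2 := by
    rw [EuclideanSpace.norm_sq_eq, Fintype.sum_prod_type, sq, Matrix.trace]
    refine Finset.sum_congr rfl fun i _ ↦ ?_
    rw [diag_apply, mul_apply]
    refine Finset.sum_congr rfl fun j _ ↦ ?_
    rw [hA.apply i j, ← sq, Real.norm_eq_abs, sq_abs]
    rfl
  rw [hnorm, scalarOrder, mul_pow, Real.sq_sqrt (by norm_num)]
  ring

lemma NsetE_subset_Sym0E (s : ℝ) : NsetE s ⊆ Sym0E := by
  rintro A ⟨n, hn, hA⟩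
  exact ⟨hA ▸ isSymm_uniax s n, hA ▸ trace_uniax hn⟩

lemma scalarOrder_of_mem_NsetE (hs : 0 ≤ s) (hA : A ∈ NsetE s) : scalarOrder A = s := by
  have hsq := trace_toM_sq (NsetE_subset_Sym0E s hA).1
  obtain ⟨n, hn, hAn⟩ := hA
  rw [hAn, trace_uniax_sq hn] at hsq
  exact (pow_left_inj₀ (scalarOrder_nonneg A) hs two_ne_zero).1 (by linarith)

lemma NsetE_nonempty (s : ℝ) : (NsetE s).Nonempty :=
  ⟨WithLp.toLp 2 fun p ↦ uniax s (Pi.single 0 1) p.1 p.2, Pi.single 0 1,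
    by simp [unitVec, Fin.sum_univ_three], rfl⟩

lemma exists_mem_Sym0E_le_infDist_NsetE (hs : 0 ≤ s) {r : ℝ} (hr : 0 ≤ r) :
    ∃ A ∈ Sym0E, r ≤ infDist A (NsetE s) := by
  obtain ⟨A, hA⟩ := NsetE_nonempty (s + √(3 / 2) * r)
  refine ⟨A, NsetE_subset_Sym0E _ hA, (le_infDist (NsetE_nonempty s)).2 fun P hP ↦ ?_⟩
  have hsub := scalarOrder_sub_le A P
  rw [scalarOrder_of_mem_NsetE (by positivity) hA, scalarOrder_of_mem_NsetE hs hP,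
    add_sub_cancel_left] at hsub
  exact le_of_mul_le_mul_left hsub (by positivity)

end ScalarOrder

section UniaxialBulk

variable {a b c C s σ : ℝ}

/-- The bulk potential along the uniaxial tensors, as a function of the scalar order parameter,
with the additive constant of the potential removed. -/
def uniaxialBulk (a b c s : ℝ) : ℝ := -(a / 3) * s ^ 2 - 2 * b / 27 * s ^ 3 + c / 9 * s ^ 4

lemma fLdG_eq_add_uniaxialBulk {P : Mat3} (hsq : (P ^ 2).trace = 2 / 3 * s ^ 2) :
    fLdG a b c C P = C + uniaxialBulk a b c s + b / 3 * (2 / 9 * s ^ 3 - (P ^ 3).trace) := by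
  rw [fLdG, ← pow_three', ← sq, hsq, uniaxialBulk]
  ring

lemma fLdG_uniax {n : Fin 3 → ℝ} (hn : unitVec n) :
    fLdG a b c C (uniax s n) = C + uniaxialBulk a b c s := by
  rw [fLdG_eq_add_uniaxialBulk (trace_uniax_sq hn), trace_uniax_pow_three hn, sub_self, mul_zero,
    add_zero]

lemma uniaxialBulk_sub_eq (hσ : 2 * c * σ ^ 2 - b * σ - 3 * a = 0) :
    uniaxialBulk a b c s - uniaxialBulk a b c σ =
      (s - σ) ^ 2 / 27 * (3 * c * s ^ 2 + 2 * (3 * c * σ - b) * s + σ * (3 * c * σ - b)) := by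
  unfold uniaxialBulk
  linear_combination (s ^ 2 - σ ^ 2) / 9 * hσ

lemma sStar_quadratic (hc : c ≠ 0) (hdiscr : 0 ≤ b ^ 2 + 24 * a * c) :
    2 * c * sStar a b c ^ 2 - b * sStar a b c - 3 * a = 0 := by
  have hsqrt := Real.sq_sqrt hdiscr
  unfold sStar
  generalize √(b ^ 2 + 24 * a * c) = r at *
  field_simp
  linarith

lemma sStar_pos (hb : 0 < b) (hc : 0 < c) : 0 < sStar a b c := by
  unfold sStar
  positivity

lemma lt_three_mul_sStar (hc : 0 < c) (hac : -b ^ 2 < 27 * a * c) :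
    b < 3 * c * sStar a b c := by
  have hsqrt : b / 3 < √(b ^ 2 + 24 * a * c) := Real.lt_sqrt_of_sq_lt (by linarith)
  have hstar : 3 * c * sStar a b c = 3 / 4 * (b + √(b ^ 2 + 24 * a * c)) := by
    unfold sStar
    field_simp
  linarith

lemma exists_uniaxialBulk_add_mul_sq_le (hb : 0 < b) (hc : 0 < c) (hac : -b ^ 2 < 27 * a * c) :
    ∃ β > 0, ∀ s ≥ 0, uniaxialBulk a b c (sStar a b c) + β * (s - sStar a b c) ^ 2 ≤
      uniaxialBulk a b c s := by
  set σ := sStar a b c with hσ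
  have hσpos : 0 < σ := sStar_pos hb hc
  have hgap : 0 < 3 * c * σ - b := sub_pos.2 (lt_three_mul_sStar hc hac)
  refine ⟨σ * (3 * c * σ - b) / 27, by positivity, fun s hs ↦ ?_⟩
  have hsub := uniaxialBulk_sub_eq (s := s)
    (sStar_quadratic (a := a) (b := b) hc.ne' (by linarith [sq_nonneg b]))
  rw [← hσ] at hsub
  have hrest : 0 ≤ (s - σ) ^ 2 / 27 * (3 * c * s ^ 2 + 2 * (3 * c * σ - b) * s) := by positivity
  linarith

end UniaxialBulk

section BulkPotential

variable {a b c C : ℝ} {A P : E9}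

lemma exists_fLdG_add_mul_sq_le (hb : 0 < b) (hc : 0 < c) (hac : -b ^ 2 < 27 * a * c) (C : ℝ) :
    ∃ β > 0, ∀ A ∈ Sym0E, C + uniaxialBulk a b c (sStar a b c) +
      β * (scalarOrder A - sStar a b c) ^ 2 +
      b / 3 * (2 / 9 * scalarOrder A ^ 3 - (toM A ^ 3).trace) ≤ fLdG a b c C (toM A) := by
  obtain ⟨β, hβ, hbulk⟩ := exists_uniaxialBulk_add_mul_sq_le hb hc hac
  refine ⟨β, hβ, fun A hA ↦ ?_⟩
  rw [fLdG_eq_add_uniaxialBulk (trace_toM_sq hA.1)]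
  linarith [hbulk _ (scalarOrder_nonneg A)]

lemma trace_toM_pow_three_le (hA : A ∈ Sym0E) :
    (toM A ^ 3).trace ≤ 2 / 9 * scalarOrder A ^ 3 :=
  trace_pow_three_le hA.1 hA.2 (scalarOrder_nonneg A) (trace_toM_sq hA.1)

lemma mem_NsetE_sStar_of_fLdG_le (hb : 0 < b) (hc : 0 < c) (hac : -b ^ 2 < 27 * a * c)
    (hA : A ∈ Sym0E) (hP : P ∈ NsetE (sStar a b c))
    (hle : fLdG a b c C (toM A) ≤ fLdG a b c C (toM P)) : A ∈ NsetE (sStar a b c) := by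
  obtain ⟨β, hβ, hgap⟩ := exists_fLdG_add_mul_sq_le hb hc hac C
  obtain ⟨n, hn, hPn⟩ := hP
  rw [hPn, fLdG_uniax hn] at hle
  have hquad : 0 ≤ β * (scalarOrder A - sStar a b c) ^ 2 := by positivity
  have hcubic : 0 ≤ b / 3 * (2 / 9 * scalarOrder A ^ 3 - (toM A ^ 3).trace) :=
    mul_nonneg (by positivity) (sub_nonneg.2 (trace_toM_pow_three_le hA))
  have hquad_zero : β * (scalarOrder A - sStar a b c) ^ 2 = 0 := by linarith [hgap A hA]
  have hcubic_zero : b / 3 * (2 / 9 * scalarOrder A ^ 3 - (toM A ^ 3).trace) = 0 := by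
    linarith [hgap A hA]
  have horder : scalarOrder A = sStar a b c :=
    sub_eq_zero.1 (pow_eq_zero_iff two_ne_zero |>.1 (by simpa [hβ.ne'] using hquad_zero))
  have hcube : (toM A ^ 3).trace = 2 / 9 * scalarOrder A ^ 3 :=
    (sub_eq_zero.1 (by simpa [hb.ne'] using hcubic_zero)).symm
  have hsq := trace_toM_sq hA.1
  rw [horder] at hsq hcube
  exact exists_unitVec_eq_uniax hA.1 hA.2 (sStar_pos hb hc) hsq hcube

lemma tendsto_fLdG_cocompact_inf_principal_Sym0E (hb : 0 < b) (hc : 0 < c)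
    (hac : -b ^ 2 < 27 * a * c) :
    Tendsto (fun A ↦ fLdG a b c C (toM A)) (cocompact E9 ⊓ 𝓟 Sym0E) atTop := by
  obtain ⟨β, hβ, hgap⟩ := exists_fLdG_add_mul_sq_le hb hc hac C
  have hquad : Tendsto (fun A ↦ C + uniaxialBulk a b c (sStar a b c) +
      β * (scalarOrder A - sStar a b c) ^ 2) (cocompact E9) atTop :=
    tendsto_atTop_add_const_left _ _ <| Tendsto.const_mul_atTop hβ <|
      (tendsto_pow_atTop two_ne_zero).comp <|
        tendsto_atTop_add_const_right _ _ tendsto_scalarOrder_cocompact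
  refine tendsto_atTop_mono' _ ?_ (hquad.mono_left inf_le_left)
  filter_upwards [mem_inf_of_right (mem_principal_self Sym0E)] with A hA
  have hcubic : 0 ≤ b / 3 * (2 / 9 * scalarOrder A ^ 3 - (toM A ^ 3).trace) :=
    mul_nonneg (by positivity) (sub_nonneg.2 (trace_toM_pow_three_le hA))
  linarith [hgap A hA]

lemma continuous_toM : Continuous toM := by
  unfold toM
  fun_prop

lemma continuous_fLdG : Continuous (fLdG a b c C) := by
  unfold fLdG
  fun_prop

lemma isClosed_Sym0E : IsClosed Sym0E :=
  (isClosed_eq continuous_toM.matrix_transpose continuous_toM).inter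
    (isClosed_eq continuous_toM.matrix_trace continuous_const)

lemma exists_isMinOn_fLdG (hb : 0 < b) (hc : 0 < c) (hac : -b ^ 2 < 27 * a * c) {S : Set E9}
    (hS : IsClosed S) (hne : S.Nonempty) (hsub : S ⊆ Sym0E) :
    ∃ P ∈ S, IsMinOn (fun A ↦ fLdG a b c C (toM A)) S P := by
  obtain ⟨P₀, hP₀⟩ := hne
  refine (continuous_fLdG.comp continuous_toM).continuousOn.exists_isMinOn' hS hP₀ ?_
  have hcoercive := (tendsto_fLdG_cocompact_inf_principal_Sym0E (C := C) hb hc hac).mono_left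
    (inf_le_inf_left (cocompact E9) (principal_mono.2 hsub))
  exact hcoercive.eventually_ge_atTop _

lemma fminδ_pos (hb : 0 < b) (hc : 0 < c) (hac : -b ^ 2 < 27 * a * c)
    (hC : 0 ∈ lowerBounds ((fun A ↦ fLdG a b c C (toM A)) '' Sym0E)) {δ : ℝ} (hδ : 0 < δ) :
    0 < fminδ a b c C δ := by
  set N := NsetE (sStar a b c)
  set S := Sym0E ∩ {P | δ / 2 ≤ infDist P N}
  have hSclosed : IsClosed S :=
    isClosed_Sym0E.inter (isClosed_le continuous_const (continuous_infDist_pt N))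
  have hSne : S.Nonempty := exists_mem_Sym0E_le_infDist_NsetE (sStar_pos hb hc).le (by positivity)
  obtain ⟨P, hPS, hmin⟩ := exists_isMinOn_fLdG (C := C) hb hc hac hSclosed hSne inter_subset_left
  have hPpos : 0 < fLdG a b c C (toM P) := by
    by_contra! hPle
    obtain ⟨R, hR⟩ := NsetE_nonempty (sStar a b c)
    have hRnonneg := hC (mem_image_of_mem _ (NsetE_subset_Sym0E _ hR))
    have hPN : P ∈ N := mem_NsetE_sStar_of_fLdG_le hb hc hac hPS.1 hR (hPle.trans hRnonneg)
    have hfar : δ / 2 ≤ infDist P N := hPS.2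
    rw [infDist_zero_of_mem hPN] at hfar
    linarith
  refine hPpos.trans_le (le_csInf ⟨_, P, hPS.1, hPS.2, rfl⟩ ?_)
  rintro _ ⟨R, hR, hfar, rfl⟩
  exact hmin ⟨hR, hfar⟩

lemma fminδ_le (hC : BddBelow ((fun A ↦ fLdG a b c C (toM A)) '' Sym0E)) (hP : P ∈ Sym0E)
    {δ : ℝ} (hfar : δ / 2 ≤ infDist P (NsetE (sStar a b c))) :
    fminδ a b c C δ ≤ fLdG a b c C (toM P) := by
  refine csInf_le (hC.mono ?_) ⟨P, hP, hfar, rfl⟩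
  rintro _ ⟨R, hR, -, rfl⟩
  exact mem_image_of_mem _ hR

end BulkPotential

/-- The condition `-b ^ 2 < 27 * a * c` says that the isotropic state `0` has larger energy than
the uniaxial states in `NsetE (sStar a b c)`. -/
theorem statement9_general {E : Type*} [NormedAddCommGroup E] [NormedSpace ℝ E]
    [FiniteDimensional ℝ E] [MeasurableSpace E] [BorelSpace E] (μ : Measure E)
    [μ.IsAddHaarMeasure] :
    ∃ Cu > (0 : ℝ), ∀ a b c C : ℝ, 0 < b → 0 < c → -b ^ 2 < 27 * a * c →
      IsLeast ((fun A ↦ fLdG a b c C (toM A)) '' Sym0E) 0 →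
      ∀ (K : ℝ≥0) (M : ℝ), 0 < K → 0 ≤ M → ∀ Q : E → E9, LipschitzWith K Q →
        (∀ x, Q x ∈ Sym0E) →
        ∫⁻ x, ENNReal.ofReal (fLdG a b c C (toM (Q x))) ∂μ ≤ ENNReal.ofReal M →
        ∀ δ > (0 : ℝ), ∃ I : Finset E,
          (I : Set E) ⊆ {x | δ < infDist (Q x) (NsetE (sStar a b c))} ∧
          {x | δ < infDist (Q x) (NsetE (sStar a b c))} ⊆ ⋃ x ∈ I, ball x (δ / (2 * K)) ∧
          (⋃ x ∈ I, ball x (δ / (2 * K))) ⊆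
            {x | δ / 2 < infDist (Q x) (NsetE (sStar a b c))} ∧
          I.card ≤ Cu * K ^ finrank ℝ E * M / (fminδ a b c C δ * δ ^ finrank ℝ E) := by
  have hω : 0 < μ.real (ball 0 1) := measureReal_ball_pos μ 0 one_pos
  refine ⟨8 ^ finrank ℝ E / μ.real (ball 0 1), by positivity, ?_⟩
  intro a b c C hb hc hac hC K M hK hM Q hQ hSym hint δ hδ
  exact exists_finset_cover_lt_infDist μ (f := fun A ↦ fLdG a b c C (toM A)) hK hQ hδ
    (fminδ_pos hb hc hac hC.2 hδ) hM (fun x hx ↦ fminδ_le ⟨0, hC.2⟩ (hSym x) hx.le) hint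

theorem statement9 (a b c C : ℝ) (ha : 0 < a) (hb : 0 < b) (hc : 0 < c)
    (hC : IsLeast ((fun A => fLdG a b c C (toM A)) '' Sym0E) 0) :
    ∃ Cu > (0 : ℝ), ∀ (K Ebnd : ℝ), 0 < K → 0 < Ebnd →
      ∀ Q : V3 → E9,
        (∀ x y, ‖Q x - Q y‖ ≤ K * ‖x - y‖) →
        (∀ x, Q x ∈ Sym0E) →
        (∫⁻ x : V3, ENNReal.ofReal (fLdG a b c C (toM (Q x)))) ≤ ENNReal.ofReal Ebnd →
        ∀ δ > (0 : ℝ), ∃ I : Finset V3,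
          (↑I : Set V3) ⊆ {x | δ < infDist (Q x) (NsetE (sStar a b c))} ∧
          {x | δ < infDist (Q x) (NsetE (sStar a b c))} ⊆ ⋃ x ∈ I, ball x (δ / (2 * K)) ∧
          (⋃ x ∈ I, ball x (δ / (2 * K))) ⊆
            {x | δ / 2 < infDist (Q x) (NsetE (sStar a b c))} ∧
          (I.card : ℝ) ≤ Cu * K ^ 3 * Ebnd / (fminδ a b c C δ * δ ^ 3) := by
  obtain ⟨Cu, hCu, hcover⟩ := statement9_general (volume : Measure V3)
  have hac : -b ^ 2 < 27 * a * c := by linarith [show 0 < 27 * a * c + b ^ 2 by positivity]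
  refine ⟨Cu, hCu, fun K Ebnd hK hE Q hLip hSym hint δ hδ ↦ ?_⟩
  lift K to ℝ≥0 using hK.le
  have hQ : LipschitzWith K Q := LipschitzWith.of_dist_le_mul fun x y ↦ by
    simpa only [dist_eq_norm] using hLip x y
  simpa only [finrank_euclideanSpace_fin] using
    hcover a b c C hb hc hac hC K Ebnd (by exact_mod_cast hK) hE.le Q hQ hSym hint δ hδ
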